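/- Let U be an open neighborhood of (0,0) in ℝ², and suppose ν : U → ℝ and Ψ : U × [0,π] → ℝ are real-analytic functions such that for every (η,δ) ∈ U: the function x ↦ Ψ(η,δ,x) satisfies T̃_{η,δ}Ψ(η,δ,·) + ν(η,δ)·Ψ(η,δ,·) = 0 on (0,π), ∂_x Ψ(η,δ,0) = ∂_x Ψ(η,δ,π) = 0, and the normalization ∫₀^π Ψ(η,δ,x) cos(2x) dx = π/2; and suppose ν(0,0) = 4 and Ψ(0,0,x) = cos(2x). Then there exist a constant C > 0 and a neighborhood V ⊆ U of (0,0) such that |ν(η,δ) − 4 − (3/4)η²| ≤ C(|η|³ + |δ|³) for all (η,δ) ∈ V. -/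

import Mathlib

open Set Real

noncomputable section

/-- The operator `T̃_{η,δ}`, obtained from `T̃_{η,ε}` by the substitution
`ε = −(π/2)η(1+δ)`, with derivatives taken within `[0,π]`. -/
def Ttdd (η δ : ℝ) (u : ℝ → ℝ) (x : ℝ) : ℝ :=
  derivWithin (derivWithin u (Set.Icc 0 π)) (Set.Icc 0 π) x
    - (η * (1 - (π/2) * η * (1 + δ)) / (1 - η * (1 - (π/2) * η * (1 + δ)) * x))
        * derivWithin u (Set.Icc 0 π) x

open Filter Topology

/-- Uniform Lipschitz bound in the parameter at the origin. -/
lemma aux_unif (U : Set (ℝ × ℝ)) (hU0 : (0, 0) ∈ U) (Ψ : ℝ × ℝ → ℝ → ℝ)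
    (hΨ : AnalyticOnNhd ℝ (fun q : (ℝ × ℝ) × ℝ => Ψ q.1 q.2) (U ×ˢ Set.Icc 0 π)) :
    ∃ K : ℝ, 0 ≤ K ∧ ∀ᶠ p in 𝓝 ((0, 0) : ℝ × ℝ), ∀ x ∈ Set.Icc (0:ℝ) π,
      |Ψ p x - Ψ (0, 0) x| ≤ K * ‖p‖ := by
  refine IsCompact.induction_on (p := fun s => ∃ K : ℝ, 0 ≤ K ∧
    ∀ᶠ p in 𝓝 ((0, 0) : ℝ × ℝ), ∀ x ∈ s, |Ψ p x - Ψ (0, 0) x| ≤ K * ‖p‖)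
    (isCompact_Icc (a := (0:ℝ)) (b := π)) ?_ ?_ ?_ ?_
  · exact ⟨0, le_rfl, by simp⟩
  · rintro s t hst ⟨K, hK, h⟩
    exact ⟨K, hK, h.mono fun p hp x hx => hp x (hst hx)⟩
  · rintro s t ⟨K, hK, h⟩ ⟨L, hL, h'⟩
    refine ⟨K + L, by positivity, ?_⟩
    filter_upwards [h, h'] with p hp hp' x hx
    have := norm_nonneg p
    rcases hx with hx | hx
    · nlinarith [hp x hx, mul_nonneg hL this]
    · nlinarith [hp' x hx, mul_nonneg hK this]
  · intro x hx
    have han := hΨ ((0, 0), x) ⟨hU0, hx⟩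
    have hc : ContDiffAt ℝ 1 (fun q : (ℝ × ℝ) × ℝ => Ψ q.1 q.2) ((0, 0), x) := han.contDiffAt
    obtain ⟨K, t, ht, hlip⟩ := hc.exists_lipschitzOnWith
    rw [nhds_prod_eq] at ht
    obtain ⟨A, hA, B, hB, hAB⟩ := Filter.mem_prod_iff.1 ht
    refine ⟨B, mem_nhdsWithin_of_mem_nhds hB, K, K.2, ?_⟩
    filter_upwards [hA] with p hp y hy
    have h0 : ((0, 0) : ℝ × ℝ) ∈ A := mem_of_mem_nhds hA
    have := hlip.dist_le_mul (p, y) (hAB ⟨hp, hy⟩) ((0, 0), y) (hAB ⟨h0, hy⟩)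
    have e : dist ((p, y) : (ℝ × ℝ) × ℝ) ((0, 0), y) = ‖p‖ := by
      rw [Prod.dist_eq]
      simp only [dist_self]
      rw [max_eq_left dist_nonneg, show ((0, 0) : ℝ × ℝ) = 0 from rfl, dist_zero_right]
    rw [e, Real.dist_eq] at this
    exact this

/-- Test function and its derivatives. -/
lemma aux_phi (a x : ℝ) : HasDerivAt
    (fun x : ℝ => Real.cos (2*x) + a * (x/2 * Real.cos (2*x) - Real.sin (2*x) / 4))
    (-2 * Real.sin (2*x) - a * x * Real.sin (2*x)) x := by
  have h2 : HasDerivAt (fun x : ℝ => 2 * x) 2 x := by simpa using (hasDerivAt_id x).const_mul 2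
  have hc := h2.cos
  have hs := h2.sin
  have hx : HasDerivAt (fun x : ℝ => x / 2) (1/2) x := (hasDerivAt_id x).div_const 2
  refine HasDerivAt.congr_deriv (hc.add (((hx.mul hc).sub (hs.div_const 4)).const_mul a)) ?_
  try simp only [Pi.mul_apply, Pi.sub_apply, Pi.neg_apply, Pi.add_apply, id]
  ring

lemma aux_phi' (a x : ℝ) : HasDerivAt
    (fun x : ℝ => -2 * Real.sin (2*x) - a * x * Real.sin (2*x))
    (-4 * Real.cos (2*x) - a * Real.sin (2*x) - 2 * a * x * Real.cos (2*x)) x := by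
  have h2 : HasDerivAt (fun x : ℝ => 2 * x) 2 x := by simpa using (hasDerivAt_id x).const_mul 2
  have hs := h2.sin
  have hx : HasDerivAt (fun x : ℝ => a * x) a x := by simpa using (hasDerivAt_id x).const_mul a
  refine HasDerivAt.congr_deriv ((hs.const_mul (-2)).sub (hx.mul hs)) ?_
  try simp only [Pi.mul_apply, Pi.sub_apply, Pi.neg_apply, Pi.add_apply, id]
  ring

/-- Exact identity from pairing with the test function. -/
lemma aux_identity (a n : ℝ) (u : ℝ → ℝ) (hu : ∀ x ∈ Set.Icc (0:ℝ) π, AnalyticAt ℝ u x)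
    (hw : ∀ x ∈ Set.Icc (0:ℝ) π, 1 - a * x ≠ 0)
    (heq : ∀ x ∈ Set.Ioo (0:ℝ) π,
      derivWithin (derivWithin u (Set.Icc 0 π)) (Set.Icc 0 π) x
        - (a / (1 - a * x)) * derivWithin u (Set.Icc 0 π) x + n * u x = 0)
    (h0 : derivWithin u (Set.Icc 0 π) 0 = 0) (h1 : derivWithin u (Set.Icc 0 π) π = 0) :
    ∫ x in (0:ℝ)..π, ((n - 4) * ((1 - a * x) *
        (Real.cos (2*x) + a * (x/2 * Real.cos (2*x) - Real.sin (2*x) / 4)) * u x)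
        + 3 * a^2 * (x * Real.sin (2*x) * u x)) = 0 := by
  have hd : ∀ x ∈ Set.Icc (0:ℝ) π, derivWithin u (Set.Icc 0 π) x = deriv u x := fun x hx =>
    (hu x hx).differentiableAt.derivWithin (uniqueDiffOn_Icc Real.pi_pos x hx)
  have hd2 : ∀ x ∈ Set.Ioo (0:ℝ) π,
      derivWithin (derivWithin u (Set.Icc 0 π)) (Set.Icc 0 π) x = deriv (deriv u) x := by
    intro x hx
    have hx' := Set.Ioo_subset_Icc_self hx
    rw [derivWithin_congr (fun y hy => hd y hy) (hd x hx')]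
    exact (hu x hx').deriv.differentiableAt.derivWithin (uniqueDiffOn_Icc Real.pi_pos x hx')
  rw [hd 0 ⟨le_rfl, Real.pi_pos.le⟩] at h0
  rw [hd π ⟨Real.pi_pos.le, le_rfl⟩] at h1
  have hcu : ContinuousOn u (Set.Icc 0 π) := fun x hx => (hu x hx).continuousAt.continuousWithinAt
  have hcd : ContinuousOn (deriv u) (Set.Icc 0 π) :=
    fun x hx => (hu x hx).deriv.continuousAt.continuousWithinAt
  have key := intervalIntegral.integral_eq_sub_of_hasDerivAt_of_le (a := 0) (b := π)
    (f := fun x => (1 - a * x) * (u x * (-2 * Real.sin (2*x) - a * x * Real.sin (2*x))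
      - deriv u x * (Real.cos (2*x) + a * (x/2 * Real.cos (2*x) - Real.sin (2*x) / 4))))
    (f' := fun x => ((n - 4) * ((1 - a * x) *
        (Real.cos (2*x) + a * (x/2 * Real.cos (2*x) - Real.sin (2*x) / 4)) * u x)
        + 3 * a^2 * (x * Real.sin (2*x) * u x))) Real.pi_pos.le (by fun_prop) ?_ ?_
  · rw [key]
    simp [h0, h1]
  · intro x hx
    have hx' := Set.Ioo_subset_Icc_self hx
    have e := heq x hx
    rw [hd2 x hx, hd x hx'] at e
    have hwx := hw x hx'
    have hux := (hu x hx').differentiableAt.hasDerivAt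
    have hux2 := (hu x hx').deriv.differentiableAt.hasDerivAt
    have hwd : HasDerivAt (fun x : ℝ => 1 - a * x) (-a) x := by
      simpa using ((hasDerivAt_id x).const_mul a).const_sub 1
    have e' : (1 - a * x) * deriv (deriv u) x = a * deriv u x - n * (1 - a * x) * u x := by
      field_simp at e
      linarith
    refine HasDerivAt.congr_deriv (hwd.mul ((hux.mul (aux_phi' a x)).sub (hux2.mul (aux_phi a x)))) ?_
    try simp only [Pi.mul_apply, Pi.sub_apply, Pi.neg_apply, Pi.add_apply, id]
    linear_combination (-1) * (Real.cos (2*x) + a * (x/2 * Real.cos (2*x) - Real.sin (2*x) / 4)) * e'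
  · apply ContinuousOn.intervalIntegrable
    rw [Set.uIcc_of_le Real.pi_pos.le]
    fun_prop

lemma aux_S0 : ∫ x in (0:ℝ)..π, x * Real.sin (2*x) * Real.cos (2*x) = -π/8 := by
  rw [intervalIntegral.integral_eq_sub_of_hasDerivAt
    (f := fun x => -x * Real.cos (4*x) / 8 + Real.sin (4*x) / 32)]
  · have h1 : Real.cos (4 * π) = 1 := by
      have := Real.cos_nat_mul_two_pi 2
      rw [← this]; congr 1; push_cast; ring
    have h2 : Real.sin (4 * π) = 0 := by
      have := Real.sin_nat_mul_pi 4
      exact_mod_cast this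
    simp [h1, h2]
  · intro x _
    have h2 : HasDerivAt (fun x : ℝ => 4 * x) 4 x := by simpa using (hasDerivAt_id x).const_mul 4
    refine HasDerivAt.congr_deriv (((((hasDerivAt_id x).neg).mul h2.cos).div_const 8).add (h2.sin.div_const 32)) ?_
    try simp only [Pi.mul_apply, Pi.sub_apply, Pi.neg_apply, Pi.add_apply, id]
    have := Real.sin_two_mul (2*x)
    rw [show 2 * (2 * x) = 4 * x by ring] at this
    rw [this]; ring
  · apply Continuous.intervalIntegrable; fun_prop

lemma aux_G0 : ∫ x in (0:ℝ)..π, Real.cos (2*x) * Real.cos (2*x) = π/2 := by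
  rw [intervalIntegral.integral_eq_sub_of_hasDerivAt
    (f := fun x => x / 2 + Real.sin (4*x) / 8)]
  · have h2 : Real.sin (4 * π) = 0 := by
      have := Real.sin_nat_mul_pi 4
      exact_mod_cast this
    simp [h2]
  · intro x _
    have h2 : HasDerivAt (fun x : ℝ => 4 * x) 4 x := by simpa using (hasDerivAt_id x).const_mul 4
    refine HasDerivAt.congr_deriv (((hasDerivAt_id x).div_const 2).add (h2.sin.div_const 8)) ?_
    try simp only [Pi.mul_apply, Pi.sub_apply, Pi.neg_apply, Pi.add_apply, id]
    have := Real.cos_two_mul (2*x)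
    rw [show 2 * (2 * x) = 4 * x by ring] at this
    rw [this]; ring
  · apply Continuous.intervalIntegrable; fun_prop

/-- Pointwise/integral closeness. -/
lemma aux_int_close (f g : ℝ → ℝ) (M : ℝ) (hf : ContinuousOn f (Set.Icc 0 π))
    (hg : ContinuousOn g (Set.Icc 0 π)) (h : ∀ x ∈ Set.Icc (0:ℝ) π, |f x - g x| ≤ M) :
    |(∫ x in (0:ℝ)..π, f x) - ∫ x in (0:ℝ)..π, g x| ≤ M * π := by
  have hp := Real.pi_pos.le
  rw [← intervalIntegral.integral_sub]
  · have := intervalIntegral.norm_integral_le_of_norm_le_const (a := 0) (b := π)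
      (f := fun x => f x - g x) (C := M) (fun x hx => by
        rw [Set.uIoc_of_le hp] at hx
        exact h x (Set.Ioc_subset_Icc_self hx))
    simpa [abs_of_nonneg hp] using this
  · apply ContinuousOn.intervalIntegrable; rwa [Set.uIcc_of_le hp]
  · apply ContinuousOn.intervalIntegrable; rwa [Set.uIcc_of_le hp]

/-- The bounds on the weighted test function. -/
lemma aux_test (a r x : ℝ) (hr : r ≤ 1/100) (ha : |a| ≤ 2 * r)
    (hx : x ∈ Set.Icc (0:ℝ) π) :
    |(1 - a * x) * (Real.cos (2*x) + a * (x/2 * Real.cos (2*x) - Real.sin (2*x) / 4))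
      - Real.cos (2*x)| ≤ 20 * r := by
  have hx0 := hx.1
  have hx4 : x ≤ 4 := hx.2.trans Real.pi_le_four
  have hc := Real.abs_cos_le_one (2*x)
  have hs := Real.abs_sin_le_one (2*x)
  have hB : |x/2 * Real.cos (2*x) - Real.sin (2*x) / 4| ≤ 9/4 := by
    refine (abs_sub _ _).trans ?_
    rw [abs_mul, abs_div, abs_div, abs_of_nonneg hx0]
    norm_num
    nlinarith [abs_nonneg (Real.cos (2*x))]
  have hw : |1 - a * x| ≤ 2 := by
    have : |a * x| ≤ 1 := by
      rw [abs_mul, abs_of_nonneg hx0]; nlinarith [abs_nonneg a]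
    rw [abs_le] at *; constructor <;> linarith
  have hxc : |x * Real.cos (2*x)| ≤ 4 := by
    rw [abs_mul, abs_of_nonneg hx0]; nlinarith [abs_nonneg (Real.cos (2*x))]
  have : (1 - a * x) * (Real.cos (2*x) + a * (x/2 * Real.cos (2*x) - Real.sin (2*x) / 4))
      - Real.cos (2*x) = a * ((1 - a * x) * (x/2 * Real.cos (2*x) - Real.sin (2*x) / 4)
        - x * Real.cos (2*x)) := by ring
  rw [this, abs_mul]
  have h3 : |(1 - a * x) * (x/2 * Real.cos (2*x) - Real.sin (2*x) / 4)
        - x * Real.cos (2*x)| ≤ 10 := by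
    refine (abs_sub _ _).trans ?_
    rw [abs_mul]
    nlinarith [abs_nonneg (1 - a * x), abs_nonneg (x/2 * Real.cos (2*x) - Real.sin (2*x) / 4)]
  nlinarith [abs_nonneg a]

/-- Final algebraic estimate. -/
lemma aux_final (N G S a e t r L : ℝ) (hid : N * G + 3 * a^2 * S = 0) (ha : a = e * (1 - t))
    (hr1 : r ≤ 1/100) (hr0 : 0 ≤ r) (ht : |t| ≤ 2 * r) (hL : 0 ≤ L)
    (hG : |G - π/2| ≤ L * r) (hS : |S - (-π/8)| ≤ L * r) (hLr : L * r ≤ 1/2) :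
    |N - 3/4 * e^2| ≤ (18 + 4 * L) * (e^2 * r) := by
  have hp3 := Real.pi_gt_three
  have hp4 := Real.pi_le_four
  have hG1 : 1 ≤ G := by rw [abs_le] at hG; linarith
  have hS1 : |S| ≤ 1 := by rw [abs_le] at *; constructor <;> linarith
  have h1 : (N - 3/4 * e^2) * G
      = e^2 * (3 * (t * (2 - t)) * S - 3 * (S - (-π/8)) - 3/4 * (G - π/2)) := by
    subst ha; linear_combination hid
  have ht2 : |2 - t| ≤ 3 := by rw [abs_le] at *; constructor <;> linarith
  have h2 : |t * (2 - t) * S| ≤ 6 * r := by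
    rw [abs_mul, abs_mul]
    have : |t| * |2 - t| ≤ 6 * r := by nlinarith [abs_nonneg t, abs_nonneg (2 - t)]
    nlinarith [abs_nonneg S, mul_nonneg (abs_nonneg t) (abs_nonneg (2 - t))]
  have h3 : |3 * (t * (2 - t)) * S - 3 * (S - (-π/8)) - 3/4 * (G - π/2)| ≤ (18 + 4 * L) * r := by
    have := mul_nonneg hL hr0
    rw [abs_le] at *
    constructor <;> nlinarith
  have h4 : |(N - 3/4 * e^2) * G| ≤ e^2 * ((18 + 4 * L) * r) := by
    rw [h1, abs_mul, abs_of_nonneg (sq_nonneg e)]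
    exact mul_le_mul_of_nonneg_left h3 (sq_nonneg e)
  rw [abs_mul, abs_of_nonneg (by linarith : (0:ℝ) ≤ G)] at h4
  nlinarith [abs_nonneg (N - 3/4 * e^2)]

/-- Second-order expansion of the third Neumann eigenvalue branch of
`T̃_{η,δ}`: `ν(η,δ) = 4 + (3/4)η² + O(|η|³ + |δ|³)`. -/
theorem third_neumann_branch_second_order
    (U : Set (ℝ × ℝ)) (hUopen : IsOpen U) (hU0 : (0, 0) ∈ U)
    (ν : ℝ × ℝ → ℝ) (Ψ : ℝ × ℝ → ℝ → ℝ)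
    (hν : AnalyticOnNhd ℝ ν U)
    (hΨ : AnalyticOnNhd ℝ (fun q : (ℝ × ℝ) × ℝ => Ψ q.1 q.2) (U ×ˢ Set.Icc 0 π))
    (heq : ∀ p ∈ U, ∀ x ∈ Set.Ioo (0:ℝ) π, Ttdd p.1 p.2 (Ψ p) x + ν p * Ψ p x = 0)
    (hbc : ∀ p ∈ U, derivWithin (Ψ p) (Set.Icc 0 π) 0 = 0 ∧
      derivWithin (Ψ p) (Set.Icc 0 π) π = 0)
    (hnorm : ∀ p ∈ U, ∫ x in (0:ℝ)..π, Ψ p x * Real.cos (2*x) = π/2)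
    (hν0 : ν (0, 0) = 4)
    (hΨ0 : ∀ x ∈ Set.Icc (0:ℝ) π, Ψ (0, 0) x = Real.cos (2*x)) :
    ∃ C > (0:ℝ), ∃ V ⊆ U, IsOpen V ∧ (0, 0) ∈ V ∧
      ∀ p ∈ V, |ν p - 4 - (3/4) * p.1^2| ≤ C * (|p.1|^3 + |p.2|^3) := by
  obtain ⟨K, hK, hunif⟩ := aux_unif U hU0 Ψ hΨ
  set L : ℝ := 4 * (20 * (1 + K) + 4 * K) with hLdef
  have hL : 0 ≤ L := by positivity
  have hsmall : ∀ᶠ p in 𝓝 ((0, 0) : ℝ × ℝ), ‖p‖ < 1/100 ∧ L * ‖p‖ < 1/2 := by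
    have hc : Continuous fun p : ℝ × ℝ => ‖p‖ := continuous_norm
    have hc2 : Continuous fun p : ℝ × ℝ => L * ‖p‖ := by fun_prop
    have z : ‖((0, 0) : ℝ × ℝ)‖ = 0 := by simp
    exact (hc.continuousAt.eventually_lt_const (by simp)).and
      (hc2.continuousAt.eventually_lt_const (by simp))
  have hall := (hunif.and hsmall).and (hUopen.mem_nhds hU0)
  obtain ⟨V, hV, hVo, hV0⟩ := eventually_nhds_iff.1 hall
  refine ⟨18 + 4 * L, by positivity, V, fun p hp => (hV p hp).2, hVo, hV0, ?_⟩
  intro p hp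
  obtain ⟨⟨hclose, hr, hLr⟩, hpU⟩ := hV p hp
  obtain ⟨r, hrdef⟩ : ∃ r, r = ‖p‖ := ⟨_, rfl⟩
  rw [← hrdef] at hr hLr hclose
  have hr0 : 0 ≤ r := hrdef ▸ norm_nonneg p
  have h1r : |p.1| ≤ r := hrdef ▸ norm_fst_le p
  have h2r : |p.2| ≤ r := hrdef ▸ norm_snd_le p
  have hp3 := Real.pi_gt_three
  have hp4 := Real.pi_le_four
  have hp5 := Real.pi_lt_d2
  obtain ⟨t, htdef⟩ : ∃ t, t = (π/2) * p.1 * (1 + p.2) := ⟨_, rfl⟩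
  have ht : |t| ≤ 2 * r := by
    rw [htdef, abs_mul, abs_mul, abs_of_nonneg (by positivity : (0:ℝ) ≤ π/2)]
    have : |1 + p.2| ≤ 1.01 := by rw [abs_le] at *; constructor <;> linarith
    have h' : π/2 * |p.1| ≤ 1.575 * r := by nlinarith [abs_nonneg p.1]
    nlinarith [abs_nonneg p.1, abs_nonneg (1 + p.2)]
  obtain ⟨a, hadef⟩ : ∃ a, a = p.1 * (1 - t) := ⟨_, rfl⟩
  have ha : |a| ≤ 2 * r := by
    rw [hadef, abs_mul]
    have : |1 - t| ≤ 2 := by rw [abs_le] at *; constructor <;> linarith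
    nlinarith [abs_nonneg p.1, abs_nonneg (1 - t)]
  have hu : ∀ x ∈ Set.Icc (0:ℝ) π, AnalyticAt ℝ (Ψ p) x := by
    intro x hx
    have h := hΨ (p, x) ⟨hpU, hx⟩
    have hi : AnalyticAt ℝ (fun y : ℝ => (p, y)) x := analyticAt_const.prod analyticAt_id
    exact h.comp_of_eq hi rfl
  have hcu : ContinuousOn (Ψ p) (Set.Icc 0 π) :=
    fun x hx => (hu x hx).continuousAt.continuousWithinAt
  have hw : ∀ x ∈ Set.Icc (0:ℝ) π, 1 - a * x ≠ 0 := by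
    intro x hx h
    have : a * x ≤ |a| * |x| := by rw [← abs_mul]; exact le_abs_self _
    rw [abs_of_nonneg hx.1] at this
    nlinarith [hx.1, hx.2, abs_nonneg a]
  have hid := aux_identity a (ν p) (Ψ p) hu hw (by
    intro x hx
    have := heq p hpU x hx
    rw [Ttdd, ← htdef, ← hadef] at this
    exact this) (hbc p hpU).1 (hbc p hpU).2
  rw [intervalIntegral.integral_add, intervalIntegral.integral_const_mul,
    intervalIntegral.integral_const_mul] at hid
  rotate_left
  · apply ContinuousOn.intervalIntegrable
    rw [Set.uIcc_of_le Real.pi_pos.le]; fun_prop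
  · apply ContinuousOn.intervalIntegrable
    rw [Set.uIcc_of_le Real.pi_pos.le]; fun_prop
  have hcl : ∀ x ∈ Set.Icc (0:ℝ) π, |Ψ p x - Real.cos (2*x)| ≤ K * r := by
    intro x hx
    rw [← hΨ0 x hx]; exact hclose x hx
  have hKr : 0 ≤ K * r := mul_nonneg hK hr0
  have hM : 0 ≤ (20 * (1 + K) + 4 * K) * r := by positivity
  have hG := aux_int_close (fun x => (1 - a * x) *
      (Real.cos (2*x) + a * (x/2 * Real.cos (2*x) - Real.sin (2*x) / 4)) * Ψ p x)
    (fun x => Real.cos (2*x) * Real.cos (2*x)) ((20 * (1 + K) + 4 * K) * r)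
    (by fun_prop) (by fun_prop) (by
      intro x hx
      have h1 := aux_test a r x hr.le ha hx
      have h2 := hcl x hx
      have hc := Real.abs_cos_le_one (2*x)
      have hb : |Ψ p x| ≤ 1 + K := by
        have : K * r ≤ K := by nlinarith
        rw [abs_le] at *; constructor <;> linarith
      generalize (1 - a * x) *
        (Real.cos (2*x) + a * (x/2 * Real.cos (2*x) - Real.sin (2*x) / 4)) = W at *
      have e : W * Ψ p x - Real.cos (2*x) * Real.cos (2*x)
        = (W - Real.cos (2*x)) * Ψ p x + Real.cos (2*x) * (Ψ p x - Real.cos (2*x)) := by ring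
      show |W * Ψ p x - Real.cos (2*x) * Real.cos (2*x)| ≤ _
      rw [e]
      refine (abs_add_le _ _).trans ?_
      rw [abs_mul, abs_mul]
      have i1 : |W - Real.cos (2*x)| * |Ψ p x| ≤ 20 * r * (1 + K) :=
        mul_le_mul h1 hb (abs_nonneg _) (by positivity)
      have i2 : |Real.cos (2*x)| * |Ψ p x - Real.cos (2*x)| ≤ 1 * (K * r) :=
        mul_le_mul hc h2 (abs_nonneg _) (by positivity)
      nlinarith)
  have hS := aux_int_close (fun x => x * Real.sin (2*x) * Ψ p x)
    (fun x => x * Real.sin (2*x) * Real.cos (2*x)) ((20 * (1 + K) + 4 * K) * r)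
    (by fun_prop) (by fun_prop) (by
      intro x hx
      have h2 := hcl x hx
      have hs := Real.abs_sin_le_one (2*x)
      show |x * Real.sin (2*x) * Ψ p x - x * Real.sin (2*x) * Real.cos (2*x)| ≤ _
      rw [← mul_sub, abs_mul, abs_mul, abs_of_nonneg hx.1]
      have i1 : x * |Real.sin (2*x)| ≤ 4 * 1 :=
        mul_le_mul (hx.2.trans hp4) hs (abs_nonneg _) (by norm_num)
      have i2 := mul_le_mul i1 h2 (abs_nonneg _) (by norm_num)
      nlinarith)
  rw [aux_G0] at hG
  rw [aux_S0] at hS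
  have hfin := aux_final (ν p - 4) _ _ a p.1 t r L hid hadef hr.le hr0 ht hL
    (hG.trans (by rw [hLdef]; nlinarith)) (hS.trans (by rw [hLdef]; nlinarith)) hLr.le
  refine hfin.trans (mul_le_mul_of_nonneg_left ?_ (by positivity))
  have hr3 : r = max |p.1| |p.2| := hrdef
  have c1 : 0 ≤ |p.1|^3 := by positivity
  have c2 : 0 ≤ |p.2|^3 := by positivity
  have hsq : p.1^2 ≤ r^2 := by rw [← sq_abs]; exact pow_le_pow_left₀ (abs_nonneg _) h1r 2
  have : p.1^2 * r ≤ r^3 := by nlinarith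
  refine this.trans ?_
  rcases max_choice |p.1| |p.2| with h | h <;> rw [hr3, h] <;> linarith


end
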